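/- arXiv:1807.01192 — 3 statements merged into one kernel-verified Lean document; each statement's English description precedes it below -/
import Mathlib

section
/- Let W be a nontrivial finite-dimensional complex inner product space, and equip End(W) with the star operation given by the Hilbert-space adjoint. Then every star-algebra automorphism γ of End(W) is implemented by a unitary: there exists a unitary operator U on W such that γ(a) = U† ∘ a ∘ U for all a ∈ End(W). -/
/-!
In finite dimension every linear map is continuous, so `End(V)` and `V →L[𝕜] V` are the same star
algebra and every star isomorphism `End(V) ≃ End(W)` is continuous. A continuous one is conjugation
by an invertible `S : V → W`; compatibility with the adjoint makes `S† S` central, hence a positive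
scalar, and rescaling `S` gives a linear isometry equivalence `e`. The adjoint of `U = e⁻¹` is `e`.
-/

section

variable {𝕜 V W : Type*} [RCLike 𝕜]
  [NormedAddCommGroup V] [InnerProductSpace 𝕜 V] [FiniteDimensional 𝕜 V]
  [NormedAddCommGroup W] [InnerProductSpace 𝕜 W] [FiniteDimensional 𝕜 W]

variable (𝕜 V) in
/-- The identification of the linear endomorphisms of a finite-dimensional inner product space with
its continuous linear endomorphisms, as star algebras under the adjoint. -/
noncomputable def endStarAlgEquivContinuousEnd :
    haveI := FiniteDimensional.complete 𝕜 V
    Module.End 𝕜 V ≃⋆ₐ[𝕜] (V →L[𝕜] V) :=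
  haveI := FiniteDimensional.complete 𝕜 V
  .ofAlgEquiv (Module.End.toContinuousLinearMap V) LinearMap.adjoint_toContinuousLinearMap

@[simp]
theorem endStarAlgEquivContinuousEnd_apply_apply (a : Module.End 𝕜 V) (x : V) :
    endStarAlgEquivContinuousEnd 𝕜 V a x = a x :=
  rfl

theorem exists_linearIsometryEquiv_conj_of_end_starAlgEquiv
    (f : Module.End 𝕜 V ≃⋆ₐ[𝕜] Module.End 𝕜 W) :
    ∃ e : V ≃ₗᵢ[𝕜] W, ∀ a : Module.End 𝕜 V, f a = e.toLinearMap ∘ₗ a ∘ₗ e.symm.toLinearMap := by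
  have : CompleteSpace V := FiniteDimensional.complete 𝕜 V
  have : CompleteSpace W := FiniteDimensional.complete 𝕜 W
  let ιV := endStarAlgEquivContinuousEnd 𝕜 V
  let ιW := endStarAlgEquivContinuousEnd 𝕜 W
  let g : (V →L[𝕜] V) ≃⋆ₐ[𝕜] (W →L[𝕜] W) := (ιV.symm.trans f).trans ιW
  have continuous_g : Continuous g :=
    LinearMap.continuous_of_finiteDimensional g.toAlgEquiv.toLinearMap
  obtain ⟨e, g_eq⟩ := g.eq_linearIsometryEquivConjStarAlgEquiv continuous_g
  refine ⟨e, fun a ↦ LinearMap.ext fun x ↦ ?_⟩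
  calc f a x = g (ιV a) x := by simp [g, ιV, ιW]
    _ = e (a (e.symm x)) := by simp [g_eq, ιV]

theorem starAlgAut_end_is_unitarily_implemented_general
    (γ : Module.End 𝕜 V ≃⋆ₐ[𝕜] Module.End 𝕜 W) :
    ∃ U : W →ₗ[𝕜] V,
      (LinearMap.adjoint U ∘ₗ U = LinearMap.id ∧ U ∘ₗ LinearMap.adjoint U = LinearMap.id) ∧
      ∀ a : Module.End 𝕜 V, γ a = LinearMap.adjoint U ∘ₗ a ∘ₗ U := by
  obtain ⟨e, γ_eq⟩ := exists_linearIsometryEquiv_conj_of_end_starAlgEquiv γ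
  have adjoint_symm : LinearMap.adjoint e.symm.toLinearMap = e.toLinearMap :=
    e.symm.adjoint_toLinearMap_eq_symm
  refine ⟨e.symm.toLinearMap, ?_⟩
  rw [adjoint_symm]
  exact ⟨⟨e.toLinearEquiv.comp_symm, e.toLinearEquiv.symm_comp⟩, γ_eq⟩

end

/-- Every star-algebra automorphism of the algebra of endomorphisms of a
nontrivial finite-dimensional complex inner product space (with star given by
the Hilbert-space adjoint) is implemented by a unitary operator. -/
theorem starAlgAut_end_is_unitarily_implemented
    {W : Type*} [NormedAddCommGroup W] [InnerProductSpace ℂ W]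
    [FiniteDimensional ℂ W] [Nontrivial W]
    (γ : Module.End ℂ W ≃⋆ₐ[ℂ] Module.End ℂ W) :
    ∃ U : Module.End ℂ W,
      (LinearMap.adjoint U * U = 1 ∧ U * LinearMap.adjoint U = 1) ∧
      ∀ a : Module.End ℂ W, γ a = LinearMap.adjoint U * a * U :=
  starAlgAut_end_is_unitarily_implemented_general γ
end

section
/- Let W be a nontrivial finite-dimensional complex inner product space, A a unital associative ℂ-algebra, and π : A → End(W) a unital ℂ-algebra homomorphism such that W is a simple module under the action of A through π. Let γ and μ be ℂ-algebra automorphisms of A satisfying μ ∘ γ ∘ μ⁻¹ = γ. Let τ be a unitary operator on W such that π(μ(b)) = τ ∘ π(b) ∘ τ⁻¹ for all b ∈ A, and let R be a unitary operator on W such that R† ∘ π(b) ∘ R = π(γ(b)) for all b ∈ A. Then there exists θ ∈ ℝ such that τ ∘ R ∘ τ⁻¹ = e^{iθ} R. -/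
/-!
Both `R` and `τ R τ⁻¹` intertwine `π ∘ γ` with `π`, because `μ` commutes with `γ`. By Schur's lemma
they differ by a scalar `c`. Conjugate operators have the same determinant, so `c ^ dim W = 1`, and
over `ℂ` a root of unity is a phase.
-/

theorem semiconjBy_units_conj_of_commute {M A : Type*} [Monoid M] {π : A → M} {γ μ : A → A}
    (hμ : Function.Surjective μ) (hγμ : Function.Commute γ μ) {τ : Mˣ}
    (hτ : ∀ b, SemiconjBy (τ : M) (π b) (π (μ b))) {R : M}
    (hR : ∀ b, SemiconjBy R (π (γ b)) (π b)) (b : A) :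
    SemiconjBy (τ * R * ↑τ⁻¹) (π (γ b)) (π b) := by
  obtain ⟨a, rfl⟩ := hμ b
  rw [hγμ a]
  exact ((hτ a).mul_left (hR a)).mul_left (hτ (γ a)).units_inv_symm_left

theorem pow_finrank_eq_one_of_units_conj_eq_smul {K V : Type*} [CommRing K] [AddCommGroup V]
    [Module K V] [Module.Free K V] {τ R : (Module.End K V)ˣ} {c : K}
    (h : (τ * R * ↑τ⁻¹ : Module.End K V) = c • (R : Module.End K V)) :
    c ^ Module.finrank K V = 1 := by
  have hdet : IsUnit (LinearMap.det (R : Module.End K V)) := R.isUnit.map LinearMap.det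
  refine hdet.mul_right_cancel ?_
  calc c ^ Module.finrank K V * LinearMap.det (R : Module.End K V)
      = LinearMap.det (τ * R * ↑τ⁻¹ : Module.End K V) := by rw [h, LinearMap.det_smul]
    _ = LinearMap.det (↑τ⁻¹ * (τ * R) : Module.End K V) := by rw [map_mul, mul_comm, ← map_mul]
    _ = 1 * LinearMap.det (R : Module.End K V) := by rw [τ.inv_mul_cancel_left, one_mul]

section Schur

variable {K V ι : Type*} [Field K] [IsAlgClosed K] [AddCommGroup V] [Module K V]
  [FiniteDimensional K V] [Nontrivial V] {f : ι → Module.End K V}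

theorem exists_eq_smul_one_of_forall_commute
    (hirr : ∀ p : Submodule K V, (∀ i, ∀ x ∈ p, f i x ∈ p) → p = ⊥ ∨ p = ⊤)
    {T : Module.End K V} (hT : ∀ i, Commute T (f i)) : ∃ c : K, T = c • 1 := by
  obtain ⟨c, hc⟩ := Module.End.exists_eigenvalue T
  have htop : T.eigenspace c = ⊤ :=
    (hirr _ fun i _ hx ↦ Module.End.mapsTo_genEigenspace_of_comm (hT i) c 1 hx).resolve_left hc
  refine ⟨c, LinearMap.ext fun x ↦ ?_⟩
  exact Module.End.mem_eigenspace_iff.mp (htop ▸ Submodule.mem_top : x ∈ T.eigenspace c)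

theorem exists_eq_smul_of_forall_semiconjBy
    (hirr : ∀ p : Submodule K V, (∀ i, ∀ x ∈ p, f i x ∈ p) → p = ⊥ ∨ p = ⊤)
    {g : ι → Module.End K V} {R : (Module.End K V)ˣ} {S : Module.End K V}
    (hR : ∀ i, SemiconjBy (R : Module.End K V) (g i) (f i))
    (hS : ∀ i, SemiconjBy S (g i) (f i)) : ∃ c : K, S = c • (R : Module.End K V) := by
  obtain ⟨c, hc⟩ := exists_eq_smul_one_of_forall_commute hirr (T := S * ↑R⁻¹)
    fun i ↦ (hS i).mul_left (hR i).units_inv_symm_left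
  exact ⟨c, by rw [← R.inv_mul_cancel_right S, hc, smul_one_mul]⟩

end Schur

theorem intertwiner_projectively_translation_invariant_general
    {K V A : Type*} [Field K] [IsAlgClosed K] [AddCommGroup V] [Module K V]
    [FiniteDimensional K V] [Nontrivial V] (π : A → Module.End K V)
    (hirr : ∀ p : Submodule K V, (∀ b, ∀ x ∈ p, π b x ∈ p) → p = ⊥ ∨ p = ⊤)
    {γ μ : A → A} (hμ : Function.Surjective μ) (hγμ : Function.Commute γ μ)
    (τ : (Module.End K V)ˣ) (hτπ : ∀ b, π (μ b) = τ * π b * ↑τ⁻¹)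
    (R : (Module.End K V)ˣ) (hint : ∀ b, ↑R⁻¹ * π b * R = π (γ b)) :
    ∃ c : K, c ^ Module.finrank K V = 1 ∧
      (τ * R * ↑τ⁻¹ : Module.End K V) = c • (R : Module.End K V) := by
  have hτ (b : A) : SemiconjBy (τ : Module.End K V) (π b) (π (μ b)) :=
    hτπ b ▸ τ.mk_semiconjBy (π b)
  have hR (b : A) : SemiconjBy (R : Module.End K V) (π (γ b)) (π b) :=
    hint b ▸ (R⁻¹.mk_semiconjBy (π b)).units_inv_symm_left
  obtain ⟨c, hc⟩ := exists_eq_smul_of_forall_semiconjBy hirr hR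
    (semiconjBy_units_conj_of_commute hμ hγμ hτ hR)
  exact ⟨c, pow_finrank_eq_one_of_units_conj_eq_smul hc, hc⟩

/-- Projective translation-invariance part of the Template Correspondence
theorem: if the Heisenberg automorphism `γ` is invariant under the translation
automorphism `μ` (implemented on the representation space by the unitary `τ`),
and the unitary `R` intertwines `π` and `π ∘ γ`, then `τ R τ⁻¹ = e^{iθ} R`. -/
theorem intertwiner_projectively_translation_invariant
    {W : Type*} [NormedAddCommGroup W] [InnerProductSpace ℂ W]
    [FiniteDimensional ℂ W] [Nontrivial W]
    {A : Type*} [Ring A] [Algebra ℂ A]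
    (π : A →ₐ[ℂ] Module.End ℂ W)
    (hirr : ∀ p : Submodule ℂ W, (∀ b : A, ∀ x ∈ p, π b x ∈ p) → p = ⊥ ∨ p = ⊤)
    (γ μ : A ≃ₐ[ℂ] A)
    (hμγ : ∀ b : A, μ (γ (μ.symm b)) = γ b)
    (τ : Module.End ℂ W)
    (hτ : LinearMap.adjoint τ * τ = 1 ∧ τ * LinearMap.adjoint τ = 1)
    (hτπ : ∀ b : A, π (μ b) = τ * π b * LinearMap.adjoint τ)
    (R : Module.End ℂ W)
    (hR : LinearMap.adjoint R * R = 1 ∧ R * LinearMap.adjoint R = 1)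
    (hint : ∀ b : A, LinearMap.adjoint R * π b * R = π (γ b)) :
    ∃ θ : ℝ, τ * R * LinearMap.adjoint τ = Complex.exp (θ * Complex.I) • R := by
  have hγμ : Function.Commute γ μ := fun b ↦ by
    simpa only [μ.symm_apply_apply] using (hμγ (μ b)).symm
  obtain ⟨c, hc, hcR⟩ := intertwiner_projectively_translation_invariant_general π hirr μ.surjective
    hγμ ⟨τ, LinearMap.adjoint τ, hτ.2, hτ.1⟩ hτπ ⟨R, LinearMap.adjoint R, hR.2, hR.1⟩ hint
  obtain ⟨θ, rfl⟩ := (Complex.norm_eq_one_iff c).mp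
    (Complex.norm_eq_one_of_pow_eq_one hc Module.finrank_pos.ne')
  exact ⟨θ, hcR⟩
end

section
/- Let W be a nontrivial finite-dimensional complex vector space, ι a nonempty finite index set, and for each i ∈ ι let D_i be a unital ℂ-subalgebra of End(W) (each containing the identity) such that: (i) elements of D_i and D_j commute whenever i ≠ j; (ii) each D_i is simple as a ring; and (iii) the ℂ-linear span of the set of products { ∏_{i∈ι} d_i : d_i ∈ D_i } equals End(W). Then there exist nontrivial finite-dimensional complex vector spaces V_i, i ∈ ι, and a linear isomorphism S : W → ⨂_{i∈ι} V_i such that for each i ∈ ι, S D_i S⁻¹ equals the subalgebra of End(⨂_{i∈ι} V_i) consisting of the operators ⨂_{j∈ι} f_j with f_i ∈ End(V_i) arbitrary and f_j = id_{V_j} for all j ≠ i. -/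
open scoped TensorProduct

/-!
Since the `D i` commute pairwise, multiplication defines an algebra homomorphism `⨂ᵢ D i → End W`,
which is surjective because the `D i` generate `End W`. Over an algebraically closed field each
simple algebra `D i` is some `End (V i)`, and `⨂ᵢ End (V i) = End (⨂ᵢ V i)` is again simple, so the
homomorphism is an isomorphism `End (⨂ᵢ V i) ≃ End W`. Every such isomorphism is conjugation by a
linear isomorphism `⨂ᵢ V i ≃ W`.
-/

section NoncommProduct

variable {R ι B : Type*} [CommSemiring R] [Fintype ι] {A : ι → Type*} [∀ i, Semiring (A i)]
  [∀ i, Algebra R (A i)] [Semiring B] [Algebra R B]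
  (φ : ∀ i, A i →ₐ[R] B) (hφ : Pairwise fun i j => ∀ x y, Commute (φ i x) (φ j y))

/-- The product `a ↦ ∏ i, φ i (a i)` of algebra homomorphisms with pairwise commuting ranges, as a
monoid homomorphism. -/
def commutingProductHom : (∀ i, A i) →* B :=
  MonoidHom.noncommPiCoprod (fun i => (φ i : A i →* B)) hφ

lemma commutingProductHom_mulSingle [DecidableEq ι] (i : ι) (x : A i) :
    commutingProductHom φ hφ (Pi.mulSingle i x) = φ i x :=
  MonoidHom.noncommPiCoprod_mulSingle (fun i => (φ i : A i →* B)) (hcomm := hφ) i x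

lemma commutingProductHom_update [DecidableEq ι] (a : ∀ i, A i) (i : ι) (x : A i) :
    commutingProductHom φ hφ (Function.update a i x) =
      commutingProductHom φ hφ (Function.update a i 1) * φ i x := by
  have update_eq_mul : Function.update a i x = Function.update a i 1 * Pi.mulSingle i x := by
    rw [Pi.mulSingle, ← Function.update_mul, one_mul, mul_one]
  rw [update_eq_mul, map_mul, commutingProductHom_mulSingle]

/-- `commutingProductHom` as a multilinear map. -/
def commutingProduct : MultilinearMap R A B where
  toFun := commutingProductHom φ hφ
  map_update_add' a i x y := by
    simp only [commutingProductHom_update φ hφ a i (x + y), commutingProductHom_update φ hφ a i x,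
      commutingProductHom_update φ hφ a i y, map_add, mul_add]
  map_update_smul' a i c x := by
    simp only [commutingProductHom_update φ hφ a i (c • x), commutingProductHom_update φ hφ a i x,
      map_smul, mul_smul_comm]

/-- The algebra homomorphism out of a tensor product of algebras that is induced by algebra
homomorphisms with pairwise commuting ranges. -/
noncomputable def commutingLift : (⨂[R] i, A i) →ₐ[R] B :=
  PiTensorProduct.liftAlgHom (commutingProduct φ hφ) (map_one (commutingProductHom φ hφ))
    (map_mul (commutingProductHom φ hφ))

lemma commutingLift_singleAlgHom [DecidableEq ι] (i : ι) (a : A i) :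
    commutingLift φ hφ (PiTensorProduct.singleAlgHom i a) = φ i a :=
  (PiTensorProduct.lift.tprod _).trans (commutingProductHom_mulSingle φ hφ i a)

lemma iSup_range_le_range_commutingLift : ⨆ i, (φ i).range ≤ (commutingLift φ hφ).range := by
  classical
  refine iSup_le fun i => ?_
  rintro _ ⟨a, rfl⟩
  exact ⟨_, commutingLift_singleAlgHom φ hφ i a⟩

end NoncommProduct

section PiTensorEnd

variable {R ι : Type*} [CommSemiring R] {V : ι → Type*} [∀ i, AddCommMonoid (V i)]
  [∀ i, Module R (V i)]

/-- The algebra homomorphism `⨂ᵢ End (V i) → End (⨂ᵢ V i)` sending a pure tensor of endomorphisms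
to their tensor product. -/
noncomputable def piTensorEnd :
    (⨂[R] i, Module.End R (V i)) →ₐ[R] Module.End R (⨂[R] i, V i) :=
  PiTensorProduct.liftAlgHom (PiTensorProduct.mapMultilinear R V V)
    PiTensorProduct.map_id PiTensorProduct.map_mul

lemma piTensorEnd_tprod (f : ∀ i, Module.End R (V i)) :
    piTensorEnd (PiTensorProduct.tprod R f) = PiTensorProduct.map f :=
  PiTensorProduct.lift.tprod _

lemma piTensorEnd_basis_end [Finite ι] {κ : ι → Type*} [∀ i, Fintype (κ i)]
    [∀ i, DecidableEq (κ i)] [Fintype (∀ i, κ i)] [DecidableEq (∀ i, κ i)]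
    (b : ∀ i, Module.Basis (κ i) R (V i)) (s : ∀ i, κ i × κ i) :
    piTensorEnd (Basis.piTensorProduct (fun i => (b i).end) s) =
      (Basis.piTensorProduct b).end (Equiv.arrowProdEquivProdArrow ι κ κ s) := by
  refine (Basis.piTensorProduct b).ext fun q => ?_
  rw [Module.Basis.end_apply_apply]
  simp only [Basis.piTensorProduct_apply, piTensorEnd_tprod, PiTensorProduct.map_tprod,
    Module.Basis.end_apply_apply]
  split_ifs with hq
  · simp only [← hq, Equiv.arrowProdEquivProdArrow_apply, if_true]
  · obtain ⟨i, hi⟩ := Function.ne_iff.mp hq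
    exact (PiTensorProduct.tprod R).map_coord_zero i (if_neg hi)

lemma piTensorEnd_bijective [Finite ι] [∀ i, Module.Free R (V i)] [∀ i, Module.Finite R (V i)] :
    Function.Bijective (piTensorEnd (R := R) (V := V)) := by
  classical
  cases nonempty_fintype ι
  let b i := Module.Free.chooseBasis R (V i)
  let e := (Basis.piTensorProduct fun i => (b i).end).equiv (Basis.piTensorProduct b).end
    (Equiv.arrowProdEquivProdArrow ι _ _)
  have piTensorEnd_eq : (piTensorEnd (R := R) (V := V)).toLinearMap = e :=
    (Basis.piTensorProduct fun i => (b i).end).ext fun s =>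
      (piTensorEnd_basis_end b s).trans (Module.Basis.equiv_apply _ _ _ _).symm
  exact congr(Function.Bijective $piTensorEnd_eq).mpr e.bijective

end PiTensorEnd

section Field

variable {K : Type*} [Field K]

lemma isSimpleRing_end (V : Type*) [AddCommGroup V] [Module K V] [FiniteDimensional K V]
    [Nontrivial V] : IsSimpleRing (Module.End K V) :=
  let b := Module.finBasis K V
  have : Nonempty (Fin (Module.finrank K V)) := b.index_nonempty
  .of_ringEquiv (algEquivMatrix b).symm.toRingEquiv inferInstance

lemma exists_linearEquiv_eq_conjAlgEquiv {V W : Type*} [AddCommGroup V] [Module K V]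
    [FiniteDimensional K V] [AddCommGroup W] [Module K W] [Nontrivial W]
    (Ψ : Module.End K V →ₐ[K] Module.End K W) (hΨ : Function.Surjective Ψ) :
    ∃ T : V ≃ₗ[K] W, ∀ f, Ψ f = T.conjAlgEquiv K f := by
  have : Nontrivial V := by
    by_contra! hV
    exact not_subsingleton _ Ψ.toRingHom.codomain_trivial
  have := isSimpleRing_end (K := K) V
  obtain ⟨T, hT⟩ := (AlgEquiv.ofBijective Ψ ⟨Ψ.toRingHom.injective, hΨ⟩).eq_linearEquivConjAlgEquiv
  exact ⟨T, fun f => congr($hT f)⟩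

lemma exists_linearEquiv_conjAlgEquiv_eq_map_update {W ι : Type*} [AddCommGroup W] [Module K W]
    [Nontrivial W] [Finite ι] [DecidableEq ι]
    {V : ι → Type*} [∀ i, AddCommGroup (V i)] [∀ i, Module K (V i)]
    [∀ i, FiniteDimensional K (V i)] (φ : ∀ i, Module.End K (V i) →ₐ[K] Module.End K W)
    (hφ : Pairwise fun i j => ∀ x y, Commute (φ i x) (φ j y)) (hsup : ⨆ i, (φ i).range = ⊤) :
    ∃ S : W ≃ₗ[K] ⨂[K] i, V i, ∀ i f,
      S.conjAlgEquiv K (φ i f) =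
        PiTensorProduct.map (Function.update (fun _ => LinearMap.id) i f) := by
  cases nonempty_fintype ι
  let θ := AlgEquiv.ofBijective _ (piTensorEnd_bijective (R := K) (V := V))
  have lift_surjective : Function.Surjective (commutingLift φ hφ) := by
    rw [← AlgHom.range_eq_top, eq_top_iff, ← hsup]
    exact iSup_range_le_range_commutingLift φ hφ
  obtain ⟨T, hT⟩ := exists_linearEquiv_eq_conjAlgEquiv
    ((commutingLift φ hφ).comp θ.symm.toAlgHom) (lift_surjective.comp θ.symm.surjective)
  refine ⟨T.symm, fun i f => (T.conjAlgEquiv K).symm_apply_eq.mpr ?_⟩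
  calc φ i f = commutingLift φ hφ (PiTensorProduct.singleAlgHom i f) :=
        (commutingLift_singleAlgHom φ hφ i f).symm
    _ = commutingLift φ hφ (θ.symm (θ (PiTensorProduct.singleAlgHom i f))) := by
        rw [θ.symm_apply_apply]
    _ = T.conjAlgEquiv K (θ (PiTensorProduct.singleAlgHom i f)) := hT _
    _ = _ := congrArg (T.conjAlgEquiv K) (piTensorEnd_tprod _)

end Field

lemma exists_algHom_end_range_eq {K A : Type*} [Field K] [IsAlgClosed K] [Ring A] [Algebra K A]
    (D : Subalgebra K A) [IsSimpleRing D] [FiniteDimensional K D] :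
    ∃ n : ℕ, 0 < n ∧ ∃ φ : Module.End K (Fin n → K) →ₐ[K] A, φ.range = D := by
  obtain ⟨n, hn, ⟨e⟩⟩ := IsSimpleRing.exists_algEquiv_matrix_of_isAlgClosed K D
  let endEquiv : Module.End K (Fin n → K) ≃ₐ[K] D := LinearMap.toMatrixAlgEquiv'.trans e.symm
  refine ⟨n, hn.pos, D.val.comp endEquiv, ?_⟩
  rw [AlgHom.range_comp, (AlgHom.range_eq_top _).mpr endEquiv.surjective, Algebra.map_top,
    Subalgebra.range_val]

lemma iSup_eq_top_of_span_list_prod_eq_top {R A ι : Type*} [CommSemiring R] [Semiring A]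
    [Algebra R A] (D : ι → Subalgebra R A) (l : List ι)
    (hspan : Submodule.span R {g | ∃ d : ι → A, (∀ i, d i ∈ D i) ∧ g = (l.map d).prod} = ⊤) :
    ⨆ i, D i = ⊤ := by
  rw [← Algebra.toSubmodule_eq_top, eq_top_iff, ← hspan, Submodule.span_le]
  rintro _ ⟨d, hd, rfl⟩
  refine Subalgebra.list_prod_mem _ fun x hx => ?_
  obtain ⟨i, -, rfl⟩ := List.mem_map.mp hx
  exact le_iSup D i (hd i)

theorem tensor_factorization_of_commuting_simple_subalgebras_general
    {K W ι : Type*} [Field K] [IsAlgClosed K]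
    [AddCommGroup W] [Module K W] [FiniteDimensional K W] [Nontrivial W]
    [Finite ι] [DecidableEq ι] (D : ι → Subalgebra K (Module.End K W))
    (hcomm : ∀ i j, i ≠ j → ∀ x ∈ D i, ∀ y ∈ D j, Commute x y)
    (hsimple : ∀ i, IsSimpleRing (D i)) (hsup : ⨆ i, D i = ⊤) :
    ∃ n : ι → ℕ, (∀ i, 0 < n i) ∧ ∃ S : W ≃ₗ[K] ⨂[K] i, (Fin (n i) → K), ∀ i,
      S.conjAlgEquiv K '' (D i : Set (Module.End K W)) =
        Set.range fun f : Module.End K (Fin (n i) → K) =>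
          PiTensorProduct.map (Function.update (fun _ => LinearMap.id) i f) := by
  choose n hn φ hφD using fun i => exists_algHom_end_range_eq (D i)
  have hφ : Pairwise fun i j => ∀ x y, Commute (φ i x) (φ j y) := fun i j hij x y =>
    hcomm i j hij _ (hφD i ▸ ⟨x, rfl⟩) _ (hφD j ▸ ⟨y, rfl⟩)
  obtain ⟨S, hS⟩ := exists_linearEquiv_conjAlgEquiv_eq_map_update φ hφ (by simp only [hφD, hsup])
  refine ⟨n, hn, S, fun i => ?_⟩
  rw [← hφD i, AlgHom.coe_range, ← Set.range_comp]
  exact congrArg Set.range (funext (hS i))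

/-- Finite-dimensional factorization underlying Theorem III.10: if the unital
subalgebras `D i` of `End W` pairwise commute, are simple rings, and the span
of their products is all of `End W`, then `W` factors as a tensor product
`⨂ᵢ Vᵢ` carrying each `D i` to `End (V i) ⊗ 1`. -/
theorem tensor_factorization_of_commuting_simple_subalgebras
    {W : Type*} [AddCommGroup W] [Module ℂ W] [FiniteDimensional ℂ W] [Nontrivial W]
    {ι : Type*} [Fintype ι] [Nonempty ι] [DecidableEq ι]
    (D : ι → Subalgebra ℂ (Module.End ℂ W))
    (hcomm : ∀ i j, i ≠ j → ∀ x ∈ D i, ∀ y ∈ D j, Commute x y)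
    (hsimple : ∀ i, IsSimpleRing (D i))
    (hspan : Submodule.span ℂ
      {g : Module.End ℂ W |
        ∃ d : ∀ _ : ι, Module.End ℂ W,
          (∀ i, d i ∈ D i) ∧ g = (Finset.univ.toList.map d).prod} = ⊤) :
    ∃ n : ι → ℕ, (∀ i, 0 < n i) ∧
      ∃ S : W ≃ₗ[ℂ] ⨂[ℂ] i, (Fin (n i) → ℂ),
        ∀ i,
          (fun a : Module.End ℂ W =>
              (S.toLinearMap ∘ₗ a ∘ₗ S.symm.toLinearMap :
                Module.End ℂ (⨂[ℂ] i, (Fin (n i) → ℂ)))) '' (D i : Set (Module.End ℂ W))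
          = Set.range (fun f : Module.End ℂ (Fin (n i) → ℂ) =>
              (PiTensorProduct.map
                (Function.update (fun j => (LinearMap.id : (Fin (n j) → ℂ) →ₗ[ℂ] (Fin (n j) → ℂ))) i f) :
                Module.End ℂ (⨂[ℂ] i, (Fin (n i) → ℂ)))) :=
  tensor_factorization_of_commuting_simple_subalgebras_general D hcomm hsimple
    (iSup_eq_top_of_span_list_prod_eq_top D _ hspan)
end
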